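/- arXiv:2202.04140 — 3 statements merged into one kernel-verified Lean document; each statement's English description precedes it below -/
import Mathlib

section
/- For all fixed natural numbers α and β, the sum ∑_{k=0}^{n} k^α (n−k)^β satisfies ∑_{k=0}^{n} k^α (n−k)^β ~ n^{α+β+1} · α! · β! / (α+β+1)! as n → ∞, i.e., the ratio of the two sides tends to 1. -/
/-!
The powers are squeezed between falling factorials,
`k (k-1) ⋯ (k-α+1) ≤ k ^ α ≤ (k+α) (k+α-1) ⋯ (k+1)`,
and likewise for `(n-k) ^ β`. After this replacement the sum becomes `α! β!` times a sum of products
of binomial coefficients, evaluated by the Vandermonde-type identity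
`∑_{k ≤ n} C(k, a) C(n-k, b) = C(n+1, a+b+1)` (`sum_choose_mul_choose`). With `m = α + β + 1`, the
ratio in question therefore lies between `((n+2-m)/n)^m` and `((n+m)/n)^m`, and both tend to `1`.
-/

theorem sum_choose_mul_choose (n a b : ℕ) :
    ∑ k ∈ Finset.range (n + 1), k.choose a * (n - k).choose b = (n + 1).choose (a + b + 1) := by
  induction n generalizing b with
  | zero =>
    rcases a with _ | a <;> rcases b with _ | b <;> simp [Nat.choose_eq_zero_of_lt]
  | succ n ih =>
    rcases b with _ | b
    · have h := ih 0
      simp only [Nat.choose_zero_right, mul_one] at h ⊢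
      rw [Finset.sum_range_succ, h, Nat.choose_succ_succ (n + 1)]
      simp [add_comm]
    · rw [Finset.sum_range_succ, Nat.sub_self, Nat.choose_zero_succ, mul_zero, add_zero,
        show a + (b + 1) + 1 = (a + b + 1) + 1 by ring, Nat.choose_succ_succ (n + 1), ← ih b,
        show (a + b + 1).succ = a + (b + 1) + 1 by omega, ← ih (b + 1), ← Finset.sum_add_distrib]
      refine Finset.sum_congr rfl fun k hk => ?_
      rw [Finset.mem_range] at hk
      rw [show n + 1 - k = (n - k) + 1 by omega, Nat.choose_succ_succ, mul_add]

theorem sum_descFactorial_mul_descFactorial (n a b : ℕ) :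
    (∑ k ∈ Finset.range (n + 1), k.descFactorial a * (n - k).descFactorial b)
      * (a + b + 1).factorial
      = a.factorial * b.factorial * (n + 1).descFactorial (a + b + 1) := by
  rw [Nat.descFactorial_eq_factorial_mul_choose (n + 1), ← sum_choose_mul_choose]
  simp_rw [Nat.descFactorial_eq_factorial_mul_choose, Finset.sum_mul, Finset.mul_sum]
  exact Finset.sum_congr rfl fun k _ => by ring

theorem lower_bound (n a b : ℕ) :
    a.factorial * b.factorial * (n + 2 - (a + b + 1)) ^ (a + b + 1)
      ≤ (∑ k ∈ Finset.range (n + 1), k ^ a * (n - k) ^ b) * (a + b + 1).factorial := by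
  calc _ ≤ a.factorial * b.factorial * (n + 1).descFactorial (a + b + 1) :=
        Nat.mul_le_mul_left _ (Nat.pow_sub_le_descFactorial (n + 1) (a + b + 1))
    _ = _ := (sum_descFactorial_mul_descFactorial n a b).symm
    _ ≤ _ := by gcongr <;> exact Nat.descFactorial_le_pow _ _

/-- The sum over `k ≤ n` of the shifted falling factorials is the part `a ≤ j ≤ n + a` (with
`j = k + a`) of the full sum over `j ≤ n + a + b`. -/
theorem upper_bound (n a b : ℕ) :
    (∑ k ∈ Finset.range (n + 1), k ^ a * (n - k) ^ b) * (a + b + 1).factorial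
      ≤ a.factorial * b.factorial * (n + (a + b + 1)) ^ (a + b + 1) := by
  have hpow (x c : ℕ) : x ^ c ≤ (x + c).descFactorial c :=
    (Nat.pow_le_pow_left (by omega) c).trans (Nat.pow_sub_le_descFactorial (x + c) c)
  calc _ ≤ (∑ k ∈ Finset.range (n + 1),
          (a + k).descFactorial a * (n + a + b - (a + k)).descFactorial b)
            * (a + b + 1).factorial := by
        refine Nat.mul_le_mul_right _ (Finset.sum_le_sum fun k hk => ?_)
        rw [Finset.mem_range] at hk
        rw [show n + a + b - (a + k) = (n - k) + b by omega, add_comm a k]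
        exact Nat.mul_le_mul (hpow _ _) (hpow _ _)
    _ ≤ (∑ j ∈ Finset.range (n + a + b + 1),
          j.descFactorial a * (n + a + b - j).descFactorial b) * (a + b + 1).factorial := by
        refine Nat.mul_le_mul_right _ ?_
        rw [← Finset.sum_image (s := Finset.range (n + 1)) (g := fun k => a + k)
          (f := fun j => j.descFactorial a * (n + a + b - j).descFactorial b)
          (fun x _ y _ h => Nat.add_left_cancel h)]
        refine Finset.sum_le_sum_of_subset fun j hj => ?_
        simp only [Finset.mem_image, Finset.mem_range] at hj ⊢
        omega
    _ = a.factorial * b.factorial * (n + a + b + 1).descFactorial (a + b + 1) :=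
        sum_descFactorial_mul_descFactorial (n + a + b) a b
    _ ≤ _ := by
        rw [show n + a + b + 1 = n + (a + b + 1) by ring]
        exact Nat.mul_le_mul_left _ (Nat.descFactorial_le_pow _ _)

theorem tendsto_add_div_pow (c : ℝ) (m : ℕ) :
    Filter.Tendsto (fun n : ℕ => (((n : ℝ) + c) / n) ^ m) Filter.atTop (nhds 1) := by
  have h : Filter.Tendsto (fun n : ℕ => (1 + c / (n : ℝ)) ^ m) Filter.atTop (nhds 1) := by
    simpa using ((tendsto_const_div_atTop_nhds_zero_nat c).const_add 1).pow m
  refine h.congr' ?_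
  filter_upwards [Filter.eventually_gt_atTop 0] with n hn
  have : (n : ℝ) ≠ 0 := by positivity
  rw [add_div, div_self this]

/-- `∑_{k=0}^{n} k^α (n−k)^β ~ n^(α+β+1) α! β! / (α+β+1)!` as `n → ∞`,
for fixed natural numbers `α, β`. -/
theorem sum_pow_mul_pow_asymptotics (α β : ℕ) :
    Filter.Tendsto
      (fun n : ℕ =>
        ((∑ k ∈ Finset.range (n + 1), k ^ α * (n - k) ^ β : ℕ) : ℝ) /
          ((n : ℝ) ^ (α + β + 1) * (Nat.factorial α) * (Nat.factorial β)
            / (Nat.factorial (α + β + 1))))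
      Filter.atTop (nhds 1) := by
  refine tendsto_of_tendsto_of_tendsto_of_le_of_le'
    (tendsto_add_div_pow (2 - ((α + β + 1 : ℕ) : ℝ)) (α + β + 1))
    (tendsto_add_div_pow ((α + β + 1 : ℕ) : ℝ) (α + β + 1)) ?_ ?_
  · -- for `n ≥ α + β + 1` the subtraction in `lower_bound` is not truncated
    filter_upwards [Filter.eventually_ge_atTop (α + β + 1)] with n hn
    have hn0 : (0 : ℝ) < n := by exact_mod_cast (by omega : 0 < n)
    have h : ((α.factorial * β.factorial * (n + 2 - (α + β + 1)) ^ (α + β + 1) : ℕ) : ℝ) ≤ _ :=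
      Nat.cast_le.mpr (lower_bound n α β)
    rw [Nat.cast_mul, Nat.cast_mul, Nat.cast_pow, Nat.cast_sub (by omega), Nat.cast_mul,
      Nat.cast_add n 2, Nat.cast_ofNat, add_sub_assoc] at h
    rw [div_div_eq_mul_div, div_pow, div_le_div_iff₀ (by positivity) (by positivity)]
    nlinarith [mul_le_mul_of_nonneg_right h (by positivity : (0 : ℝ) ≤ (n : ℝ) ^ (α + β + 1))]
  · filter_upwards [Filter.eventually_gt_atTop 0] with n hn
    have hn0 : (0 : ℝ) < n := by exact_mod_cast hn
    have h : _ ≤ ((α.factorial * β.factorial * (n + (α + β + 1)) ^ (α + β + 1) : ℕ) : ℝ) :=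
      Nat.cast_le.mpr (upper_bound n α β)
    rw [Nat.cast_mul, Nat.cast_mul (_ * _), Nat.cast_mul, Nat.cast_pow, Nat.cast_add n] at h
    rw [div_div_eq_mul_div, div_pow, div_le_div_iff₀ (by positivity) (by positivity)]
    nlinarith [mul_le_mul_of_nonneg_right h (by positivity : (0 : ℝ) ≤ (n : ℝ) ^ (α + β + 1))]
end

section
/- For every fixed integer ν ≥ 3, as D → ∞ the cardinalities satisfy #K̂_{SO(2)}(ν, D) = Θ(D^{2ν−1}) and #D̂_{SO(2)}(ν, D) = Θ(D^{2ν−2}), where D̂_{SO(2)}(ν, D) is the subset of dependent elements of K̂_{SO(2)}(ν, D). -/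
/-!
Both counts are lattice-point counts of the expected dimension.

*Upper bounds.* All coordinates lie in `[-D, D]`. The relation `∑ m = 0` makes one coordinate of
`m` redundant, and a vanishing subsum over a nonempty proper `S` makes one coordinate in `S` and
one outside `S` redundant. So `K̂` has at most `(2D+1)^(2ν-1)` elements, and `D̂` is a union, over
at most `2^ν` subsets `S`, of sets with at most `(2D+1)^(2ν-2)` elements (`ncard_le_of_determined`).

*Lower bounds.* With `k = ⌊D / (3ν²)⌋` and `q ≤ ν - 1`, let the first `q` entries of `m` range
freely over the stacked intervals `(ν-1-i)k + [0, k]`, which forces them to be decreasing; the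
remaining entries are `0`, except the last one, which balances the sum. With `n ∈ [0, k]^ν` this
gives `(k+1)^(q+ν)` elements of `K̂` (`lower_bound`). The choice `q = ν - 1` gives the bound for
`K̂`; for `q = ν - 2` the entry before the last is `0`, so all these elements are dependent.
-/

/-- `K̂_{SO(2)}(ν, D)`: ordered pairs of tuples `(m, n) ∈ ℤ^ν × ℤ^ν` with `m`
weakly decreasing and summing to `0`, `n` nonnegative, and
`∑ (nᵗ + |mᵗ|) ≤ D`. -/
def KhatSO2 (ν D : ℕ) : Set ((Fin ν → ℤ) × (Fin ν → ℤ)) :=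
  {x | (∀ i j : Fin ν, i ≤ j → x.1 j ≤ x.1 i) ∧ (∑ t, x.1 t) = 0 ∧
    (∀ t, 0 ≤ x.2 t) ∧ (∑ t, (x.2 t + |x.1 t|)) ≤ (D : ℤ)}

/-- `(m, n)` is *dependent* if some nonempty proper subset of the index set has
`m`-entries summing to `0`. -/
def IsDependentHatSO2 {ν : ℕ} (x : (Fin ν → ℤ) × (Fin ν → ℤ)) : Prop :=
  ∃ S : Finset (Fin ν), S.Nonempty ∧ S ≠ Finset.univ ∧ (∑ t ∈ S, x.1 t) = 0

/-- `D̂_{SO(2)}(ν, D)`: the dependent elements of `K̂_{SO(2)}(ν, D)`. -/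
def DhatSO2 (ν D : ℕ) : Set ((Fin ν → ℤ) × (Fin ν → ℤ)) :=
  {x | x ∈ KhatSO2 ν D ∧ IsDependentHatSO2 x}

lemma KhatSO2.mem_box {ν D : ℕ} {x : (Fin ν → ℤ) × (Fin ν → ℤ)} (hx : x ∈ KhatSO2 ν D)
    (t : Fin ν) : x.1 t ∈ Finset.Icc (-(D : ℤ)) D ∧ x.2 t ∈ Finset.Icc (-(D : ℤ)) D := by
  obtain ⟨-, -, h3, h4⟩ := hx
  have h := Finset.single_le_sum (f := fun t => x.2 t + |x.1 t|)
    (fun i _ => add_nonneg (h3 i) (abs_nonneg _)) (Finset.mem_univ t)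
  have h5 := h3 t
  have h6 := neg_abs_le (x.1 t)
  have h7 := le_abs_self (x.1 t)
  have h8 := abs_nonneg (x.1 t)
  simp only [Finset.mem_Icc]
  refine ⟨⟨?_, ?_⟩, ?_, ?_⟩ <;> linarith

lemma KhatSO2.finite (ν D : ℕ) : (KhatSO2 ν D).Finite := by
  refine Set.Finite.subset (Finset.finite_toSet
    ((Fintype.piFinset fun _ : Fin ν => Finset.Icc (-(D : ℤ)) D) ×ˢ
      (Fintype.piFinset fun _ : Fin ν => Finset.Icc (-(D : ℤ)) D))) ?_
  intro x hx
  simp only [Finset.coe_product, Set.mem_prod, Finset.mem_coe, Fintype.mem_piFinset]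
  exact ⟨fun t => (KhatSO2.mem_box hx t).1, fun t => (KhatSO2.mem_box hx t).2⟩

/-- If, within a subset of `K̂`, the coordinates of `m` in `T` determine all of `m`, then the
subset has at most `(2D+1)^(#T+ν)` elements. -/
lemma ncard_le_of_determined {ν D : ℕ} (X : Set ((Fin ν → ℤ) × (Fin ν → ℤ)))
    (hX : X ⊆ KhatSO2 ν D) (T : Finset (Fin ν))
    (hT : ∀ x ∈ X, ∀ y ∈ X, (∀ t ∈ T, x.1 t = y.1 t) → x.1 = y.1) :
    X.ncard ≤ (2 * D + 1) ^ (T.card + ν) := by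
  let B : Finset ((T → ℤ) × (Fin ν → ℤ)) :=
    (Fintype.piFinset fun _ : T => Finset.Icc (-(D : ℤ)) D) ×ˢ
      (Fintype.piFinset fun _ : Fin ν => Finset.Icc (-(D : ℤ)) D)
  have hB : B.card = (2 * D + 1) ^ (T.card + ν) := by
    have : ((D : ℤ) + 1 + D).toNat = 2 * D + 1 := by omega
    simp [B, Finset.card_product, Fintype.card_piFinset, pow_add, this]
  rw [← hB, ← Set.ncard_coe_finset]
  refine Set.ncard_le_ncard_of_injOn (fun x => (fun t : T => x.1 t, x.2)) ?_ ?_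
    (Finset.finite_toSet _)
  · intro x hx
    simp only [B, Finset.coe_product, Set.mem_prod, Finset.mem_coe, Fintype.mem_piFinset]
    exact ⟨fun t => (KhatSO2.mem_box (hX hx) t).1, fun t => (KhatSO2.mem_box (hX hx) t).2⟩
  · intro x hx y hy hxy
    simp only [Prod.mk.injEq] at hxy
    exact Prod.ext (hT x hx y hy fun t ht => congrFun hxy.1 ⟨t, ht⟩) hxy.2

/-- Two functions with equal sums over `S` that agree on `S` away from `a` agree at `a`. -/
lemma eq_at_of_sum_eq {ι : Type*} [DecidableEq ι] {S : Finset ι} {f g : ι → ℤ} {a : ι}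
    (ha : a ∈ S) (hs : ∑ t ∈ S, f t = ∑ t ∈ S, g t)
    (h : ∀ t ∈ S, t ≠ a → f t = g t) : f a = g a := by
  rw [← Finset.add_sum_erase S f ha, ← Finset.add_sum_erase S g ha,
    Finset.sum_congr rfl fun t ht =>
      h t (Finset.mem_of_mem_erase ht) (Finset.ne_of_mem_erase ht)] at hs
  linarith

lemma KhatSO2.ncard_le {ν : ℕ} (hν : 3 ≤ ν) (D : ℕ) :
    (KhatSO2 ν D).ncard ≤ (2 * D + 1) ^ (2 * ν - 1) := by
  let a : Fin ν := ⟨0, by omega⟩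
  have h := ncard_le_of_determined (KhatSO2 ν D) subset_rfl (Finset.univ.erase a) (by
    intro x hx y hy h
    have h' : ∀ t, t ≠ a → x.1 t = y.1 t := fun t ht => h t (by simp [ht])
    funext t
    by_cases ht : t = a
    · subst ht
      exact eq_at_of_sum_eq (Finset.mem_univ _) (hx.2.1.trans hy.2.1.symm) fun t _ => h' t
    · exact h' t ht)
  rw [Finset.card_erase_of_mem (Finset.mem_univ _), Finset.card_univ, Fintype.card_fin] at h
  rwa [show 2 * ν - 1 = ν - 1 + ν by omega]

lemma DhatSO2.ncard_le {ν : ℕ} (D : ℕ) :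
    (DhatSO2 ν D).ncard ≤ 2 ^ ν * (2 * D + 1) ^ (2 * ν - 2) := by
  classical
  let I : Finset (Finset (Fin ν)) := Finset.univ.filter fun S => S.Nonempty ∧ S ≠ Finset.univ
  let X : Finset (Fin ν) → Set ((Fin ν → ℤ) × (Fin ν → ℤ)) := fun S =>
    {x | x ∈ KhatSO2 ν D ∧ ∑ t ∈ S, x.1 t = 0}
  have hsub : DhatSO2 ν D ⊆ ⋃ S ∈ I, X S := by
    rintro x ⟨hx, S, h1, h2, h3⟩
    simp only [Set.mem_iUnion]
    exact ⟨S, by simp [I, h1, h2], hx, h3⟩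
  have hX : ∀ S ∈ I, (X S).ncard ≤ (2 * D + 1) ^ (2 * ν - 2) := by
    intro S hS
    obtain ⟨⟨a, ha⟩, hne⟩ : S.Nonempty ∧ S ≠ Finset.univ := by simpa [I] using hS
    obtain ⟨b, hb⟩ : ∃ b, b ∉ S := by
      by_contra! hcon
      exact hne (Finset.eq_univ_iff_forall.2 hcon)
    have hba : b ≠ a := fun e => hb (e ▸ ha)
    have h := ncard_le_of_determined (X S) (fun x hx => hx.1) ((Finset.univ.erase a).erase b) (by
      intro x hx y hy h
      have h' : ∀ t, t ≠ a → t ≠ b → x.1 t = y.1 t := fun t ht ht' => h t (by simp [ht, ht'])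
      have ea : x.1 a = y.1 a := eq_at_of_sum_eq ha (hx.2.trans hy.2.symm)
        fun t ht hta => h' t hta fun e => hb (e ▸ ht)
      have eb : x.1 b = y.1 b := by
        refine eq_at_of_sum_eq (Finset.mem_univ b) (hx.1.2.1.trans hy.1.2.1.symm) fun t _ htb => ?_
        by_cases hta : t = a
        · rw [hta, ea]
        · exact h' t hta htb
      funext t
      by_cases hta : t = a
      · rw [hta, ea]
      by_cases htb : t = b
      · rw [htb, eb]
      exact h' t hta htb)
    have hlt : 2 ≤ ν := by
      have := a.isLt
      have := b.isLt
      have : (b : ℕ) ≠ a := fun e => hba (Fin.ext e)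
      omega
    rw [Finset.card_erase_of_mem (by simp [hba]), Finset.card_erase_of_mem (Finset.mem_univ _),
      Finset.card_univ, Fintype.card_fin] at h
    rwa [show 2 * ν - 2 = ν - 1 - 1 + ν by omega]
  have hfin : (⋃ S ∈ I, X S).Finite :=
    (KhatSO2.finite ν D).subset (Set.iUnion₂_subset fun S _ x hx => hx.1)
  calc (DhatSO2 ν D).ncard ≤ (⋃ S ∈ I, X S).ncard := Set.ncard_le_ncard hsub hfin
    _ ≤ ∑ S ∈ I, (X S).ncard := Finset.set_ncard_biUnion_le I X
    _ ≤ I.card • (2 * D + 1) ^ (2 * ν - 2) := Finset.sum_le_card_nsmul _ _ _ hX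
    _ ≤ 2 ^ ν * (2 * D + 1) ^ (2 * ν - 2) := by
      rw [smul_eq_mul]
      refine Nat.mul_le_mul_right _ ?_
      calc I.card ≤ Fintype.card (Finset (Fin ν)) := Finset.card_le_univ _
        _ = 2 ^ ν := by simp

/-- The free part of `m`: entry `i < q` is `(ν-1-i)k + dᵢ`, the other entries are `0`. -/
def freePart (ν k q : ℕ) (d : Fin q → Fin (k + 1)) (i : Fin ν) : ℤ :=
  if h : (i : ℕ) < q then ((ν : ℤ) - 1 - i) * k + (d ⟨i, h⟩ : ℕ) else 0

/-- The free part with entry `l` (the last one, in use) lowered so that the total is `0`. -/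
def balanced (ν k q : ℕ) (l : Fin ν) (d : Fin q → Fin (k + 1)) (i : Fin ν) : ℤ :=
  freePart ν k q d i - (Pi.single l (∑ t, freePart ν k q d t) : Fin ν → ℤ) i

lemma freePart_nonneg (ν k q : ℕ) (d : Fin q → Fin (k + 1)) (i : Fin ν) :
    0 ≤ freePart ν k q d i := by
  unfold freePart
  split_ifs with h
  · have : (0 : ℤ) ≤ (ν : ℤ) - 1 - i := by
      have := i.isLt
      omega
    positivity
  · exact le_rfl

lemma freePart_le (ν k q : ℕ) (d : Fin q → Fin (k + 1)) (i : Fin ν) :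
    freePart ν k q d i ≤ ν * k := by
  unfold freePart
  split_ifs with h
  · have h1 : ((d ⟨i, h⟩ : ℕ) : ℤ) ≤ k := by
      have := (d ⟨i, h⟩).isLt
      omega
    have h2 : (0 : ℤ) ≤ (i : ℕ) * (k : ℤ) := by positivity
    nlinarith
  · positivity

lemma freePart_anti (ν k q : ℕ) (d : Fin q → Fin (k + 1)) {i j : Fin ν} (hij : i ≤ j) :
    freePart ν k q d j ≤ freePart ν k q d i := by
  rcases hij.eq_or_lt with rfl | hlt
  · exact le_rfl
  by_cases hj : (j : ℕ) < q
  · have hlt' : (i : ℕ) < j := hlt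
    have hi : (i : ℕ) < q := hlt'.trans hj
    simp only [freePart, hj, hi, dif_pos]
    have h1 : ((d ⟨j, hj⟩ : ℕ) : ℤ) ≤ k := by
      have := (d ⟨j, hj⟩).isLt
      omega
    have h2 : (0 : ℤ) ≤ ((j : ℕ) - (i : ℕ) - 1 : ℤ) * k :=
      mul_nonneg (by omega) (by positivity)
    have h3 : (0 : ℤ) ≤ ((d ⟨i, hi⟩ : ℕ) : ℤ) := by positivity
    linarith
  · have : freePart ν k q d j = 0 := by simp [freePart, hj]
    rw [this]
    exact freePart_nonneg ..

lemma balanced_of_ne {ν k q : ℕ} {l : Fin ν} (d : Fin q → Fin (k + 1)) {i : Fin ν} (h : i ≠ l) :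
    balanced ν k q l d i = freePart ν k q d i := by
  simp [balanced, h]

lemma balanced_mem {ν k q D : ℕ} {l : Fin ν} (hl : (l : ℕ) = ν - 1) (hq : q ≤ ν - 1)
    (hk : 3 * ν ^ 2 * k ≤ D) (d : Fin q → Fin (k + 1)) (n : Fin ν → Fin (k + 1)) :
    (balanced ν k q l d, fun t => ((n t : ℕ) : ℤ)) ∈ KhatSO2 ν D := by
  have hs : 0 ≤ ∑ t, freePart ν k q d t := Finset.sum_nonneg fun t _ => freePart_nonneg ..
  have hsle : ∑ t, freePart ν k q d t ≤ ν * (ν * k) := by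
    have := Finset.sum_le_card_nsmul Finset.univ (freePart ν k q d) _
      fun t _ => freePart_le ν k q d t
    simpa using this
  have hl0 : freePart ν k q d l = 0 := by
    have : ¬ ((l : ℕ) < q) := by omega
    simp [freePart, this]
  refine ⟨?_, ?_, ?_, ?_⟩
  · intro i j hij
    simp only
    by_cases hj : j = l
    · by_cases hi : i = l
      · rw [hi, hj]
      · rw [balanced_of_ne d hi, hj]
        have := freePart_nonneg ν k q d i
        simp only [balanced, hl0, Pi.single_eq_same]
        linarith
    · have hi : i ≠ l := by
        intro e
        apply hj
        have := j.isLt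
        have hij' : (i : ℕ) ≤ j := hij
        rw [e] at hij'
        exact Fin.ext (by omega)
      rw [balanced_of_ne d hi, balanced_of_ne d hj]
      exact freePart_anti ν k q d hij
  · simp [balanced, Finset.sum_sub_distrib]
  · intro t
    positivity
  · have hb : ∀ t : Fin ν, ((n t : ℕ) : ℤ) + |balanced ν k q l d t| ≤
        k + (freePart ν k q d t + (Pi.single l (∑ t, freePart ν k q d t) : Fin ν → ℤ) t) := by
      intro t
      have h1 : ((n t : ℕ) : ℤ) ≤ k := by
        have := (n t).isLt
        omega
      have h2 := freePart_nonneg ν k q d t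
      have h3 : 0 ≤ (Pi.single l (∑ t, freePart ν k q d t) : Fin ν → ℤ) t :=
        (Pi.single_nonneg.2 hs : (0 : Fin ν → ℤ) ≤ _) t
      have h4 : |balanced ν k q l d t| ≤ freePart ν k q d t +
          (Pi.single l (∑ t, freePart ν k q d t) : Fin ν → ℤ) t := by
        unfold balanced
        rw [abs_le]
        constructor <;> linarith
      linarith
    refine (Finset.sum_le_sum fun t _ => hb t).trans ?_
    rw [Finset.sum_add_distrib, Finset.sum_add_distrib]
    simp only [Finset.sum_const, Finset.card_univ, Fintype.card_fin, nsmul_eq_mul,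
      Finset.sum_pi_single', Finset.mem_univ, if_true]
    have hk' : (3 * ν ^ 2 * k : ℤ) ≤ D := by exact_mod_cast hk
    have h5 : (ν * k : ℤ) ≤ ν * (ν * k) := by
      have h6 : 1 ≤ ν := by
        have := l.isLt
        omega
      exact_mod_cast Nat.le_mul_of_pos_left (ν * k) h6
    nlinarith

/-- Any subset of `K̂` containing the whole `q`-parameter family has at least
`(k+1)^(q+ν)` elements. -/
lemma lower_bound_s16 {ν k q D : ℕ} {l : Fin ν} (hl : (l : ℕ) = ν - 1) (hq : q ≤ ν - 1)
    (X : Set ((Fin ν → ℤ) × (Fin ν → ℤ))) (hX : X ⊆ KhatSO2 ν D)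
    (hmem : ∀ (d : Fin q → Fin (k + 1)) (n : Fin ν → Fin (k + 1)),
      (balanced ν k q l d, fun t => ((n t : ℕ) : ℤ)) ∈ X) :
    (k + 1) ^ (q + ν) ≤ X.ncard := by
  let f : (Fin q → Fin (k + 1)) × (Fin ν → Fin (k + 1)) → (Fin ν → ℤ) × (Fin ν → ℤ) :=
    fun p => (balanced ν k q l p.1, fun t => ((p.2 t : ℕ) : ℤ))
  have hf : Function.Injective f := by
    rintro ⟨d, n⟩ ⟨d', n'⟩ h
    simp only [f, Prod.mk.injEq] at h
    obtain ⟨h1, h2⟩ := h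
    congr 1
    · funext i
      have hi := i.isLt
      have hne : (⟨i, by omega⟩ : Fin ν) ≠ l := by
        intro e
        have := congrArg Fin.val e
        simp only at this
        omega
      have h3 := congrFun h1 ⟨i, by omega⟩
      rw [balanced_of_ne d hne, balanced_of_ne d' hne] at h3
      simp only [freePart, hi, dif_pos] at h3
      apply Fin.ext
      simpa using h3
    · funext t
      have := congrFun h2 t
      apply Fin.ext
      simpa using this
  have hcard : (Set.range f).ncard = (k + 1) ^ (q + ν) := by
    rw [← Set.image_univ, Set.ncard_image_of_injective _ hf, Set.ncard_univ, Nat.card_eq_fintype_card]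
    simp [pow_add]
  rw [← hcard]
  refine Set.ncard_le_ncard ?_ ((KhatSO2.finite ν D).subset hX)
  rintro _ ⟨p, rfl⟩
  exact hmem p.1 p.2

/-- The sandwich `(⌊D/M⌋ + 1)^e ≤ N D ≤ A (2D+1)^e` implies `N D = Θ(D^e)`. -/
lemma theta_of_bounds (N : ℕ → ℕ) (e M A : ℕ) (hM : 0 < M) (hA : 0 < A)
    (hlo : ∀ D, (D / M + 1) ^ e ≤ N D) (hhi : ∀ D, N D ≤ A * (2 * D + 1) ^ e) :
    ∃ c C : ℝ, 0 < c ∧ c ≤ C ∧ ∃ D₀ : ℕ, ∀ D : ℕ, D₀ ≤ D →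
      c * (D : ℝ) ^ e ≤ (N D : ℝ) ∧ (N D : ℝ) ≤ C * (D : ℝ) ^ e := by
  have hM' : (1 : ℝ) ≤ M := by exact_mod_cast hM
  have hA' : (1 : ℝ) ≤ A := by exact_mod_cast hA
  refine ⟨(1 / M : ℝ) ^ e, A * 3 ^ e, by positivity, ?_, 1, fun D hD => ⟨?_, ?_⟩⟩
  · calc (1 / M : ℝ) ^ e ≤ 1 := pow_le_one₀ (by positivity) (by
          rw [div_le_one (by positivity)]
          exact hM')
      _ ≤ A * 3 ^ e := one_le_mul_of_one_le_of_one_le hA' (one_le_pow₀ (by norm_num))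
  · rw [← mul_pow]
    calc (1 / M * D : ℝ) ^ e ≤ ((D / M + 1 : ℕ) : ℝ) ^ e := by
          refine pow_le_pow_left₀ (by positivity) ?_ e
          rw [one_div_mul_eq_div, div_le_iff₀ (by positivity)]
          have := Nat.lt_mul_of_div_lt (Nat.lt_succ_self (D / M)) hM
          exact_mod_cast this.le
      _ ≤ N D := by exact_mod_cast hlo D
  · rw [mul_assoc, ← mul_pow]
    calc (N D : ℝ) ≤ A * (2 * D + 1) ^ e := by exact_mod_cast hhi D
      _ ≤ A * (3 * D) ^ e := by
        have : (1 : ℝ) ≤ D := by exact_mod_cast hD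
        gcongr
        linarith

/-- For fixed `ν ≥ 3`, `#K̂_{SO(2)}(ν, D) = Θ(D^(2ν−1))` and
`#D̂_{SO(2)}(ν, D) = Θ(D^(2ν−2))` as `D → ∞`. -/
theorem KhatSO2_DhatSO2_theta (ν : ℕ) (hν : 3 ≤ ν) :
    (∃ c C : ℝ, 0 < c ∧ c ≤ C ∧ ∃ D₀ : ℕ, ∀ D : ℕ, D₀ ≤ D →
      c * (D : ℝ) ^ (2 * ν - 1) ≤ ((KhatSO2 ν D).ncard : ℝ) ∧
      ((KhatSO2 ν D).ncard : ℝ) ≤ C * (D : ℝ) ^ (2 * ν - 1)) ∧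
    (∃ c C : ℝ, 0 < c ∧ c ≤ C ∧ ∃ D₀ : ℕ, ∀ D : ℕ, D₀ ≤ D →
      c * (D : ℝ) ^ (2 * ν - 2) ≤ ((DhatSO2 ν D).ncard : ℝ) ∧
      ((DhatSO2 ν D).ncard : ℝ) ≤ C * (D : ℝ) ^ (2 * ν - 2)) := by
  let l : Fin ν := ⟨ν - 1, by omega⟩
  have hM : 0 < 3 * ν ^ 2 := by positivity
  have hk : ∀ D, 3 * ν ^ 2 * (D / (3 * ν ^ 2)) ≤ D := fun D => Nat.mul_div_le D _
  refine ⟨theta_of_bounds (fun D => (KhatSO2 ν D).ncard) _ (3 * ν ^ 2) 1 hM one_pos ?_ ?_,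
    theta_of_bounds (fun D => (DhatSO2 ν D).ncard) _ (3 * ν ^ 2) (2 ^ ν) hM (by positivity) ?_ ?_⟩
  · intro D
    rw [show 2 * ν - 1 = ν - 1 + ν by omega]
    exact lower_bound_s16 (l := l) rfl le_rfl _ subset_rfl fun d n =>
      balanced_mem rfl le_rfl (hk D) d n
  · intro D
    rw [one_mul]
    exact KhatSO2.ncard_le hν D
  · intro D
    rw [show 2 * ν - 2 = ν - 2 + ν by omega]
    refine lower_bound_s16 (l := l) rfl (by omega) _ (fun x hx => hx.1) fun d n =>
      ⟨balanced_mem rfl (by omega) (hk D) d n, {⟨ν - 2, by omega⟩}, by simp, ?_, ?_⟩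
    · intro h
      have := congrArg Finset.card h
      simp at this
      omega
    · have hne : (⟨ν - 2, by omega⟩ : Fin ν) ≠ l := by
        simp only [l, ne_eq, Fin.mk.injEq]
        omega
      rw [Finset.sum_singleton]
      simp [balanced_of_ne d hne, freePart]
  · exact DhatSO2.ncard_le
end

section
/- For every fixed integer ν ≥ 3, the quantity A(ν, D) := 2 · ∑_{k=2}^{ν−1} ∑_{n=1}^{⌊D/2⌋} π(k, n) satisfies A(ν, D) ~ D^{ν−1} / (2^{ν−2} · ((ν−1)!)²) as D → ∞, i.e., the ratio of the two sides tends to 1. -/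
/-!
Let `S_k(N)` be the number of partitions of `1, …, N` into exactly `k` parts. Comparing partitions
with ordered tuples gives, for `k ≥ 1`,
`C(N, k) ≤ k! · S_k(N) ≤ C(N + k(k-1)/2 + k, k)`.
The lower bound holds because every composition is a rearrangement of some partition, which has at
most `k!` rearrangements (`multichoose_le`). The upper bound holds because adding the staircase
`(k-1, …, 1, 0)` to a partition makes its parts distinct, after which all `k!` rearrangements differ
(`factorial_mul_partCount_le`). Stars and bars counts tuples with a given sum, and the hockey-stick
identity sums these counts over the total.

Since `C(N + c, k) ~ N^k / k!` for fixed `c`, a squeeze yields `S_k(N) ~ N^k / (k!)²`. With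
`N = ⌊D/2⌋ ~ D/2`, only the term `k = ν - 1` of `A(ν, D) = 2 ∑_k S_k(⌊D/2⌋)` has order `D^(ν-1)`,
and it contributes `2 (D/2)^(ν-1) / ((ν-1)!)²`.
-/

/-- `partCount ν D` is the number of integer partitions of `D` into exactly `ν`
positive parts (with `partCount 0 D = 0` for `D ≥ 1`). -/
def partCount (ν D : ℕ) : ℕ :=
  ((Finset.univ : Finset (Fin ν → Fin (D + 1))).filter
    (fun k => (∀ i j : Fin ν, i ≤ j → (k j : ℕ) ≤ (k i : ℕ)) ∧
      (∀ i, 1 ≤ (k i : ℕ)) ∧ (∑ i, (k i : ℕ)) = D)).card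

/-- `A(ν, D) = 2 ∑_{k=2}^{ν−1} ∑_{n=1}^{⌊D/2⌋} π(k, n)`: the number of auxiliary
nodes inserted by the recursive-evaluation insertion heuristic for the
torus-invariant basis of correlation order `ν` and total degree `D`. -/
def auxCount (ν D : ℕ) : ℕ :=
  2 * ∑ k ∈ Finset.Icc 2 (ν - 1), ∑ n ∈ Finset.Icc 1 (D / 2), partCount k n

/-- The partitions of `n` into exactly `k` parts, as weakly decreasing positive `ℕ`-valued
tuples. -/
def partTuples (k n : ℕ) : Finset (Fin k → ℕ) :=
  (Finset.Nat.antidiagonalTuple k n).filter (fun f => Antitone f ∧ ∀ i, 1 ≤ f i)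

lemma mem_partTuples {k n : ℕ} {f : Fin k → ℕ} :
    f ∈ partTuples k n ↔ ∑ i, f i = n ∧ Antitone f ∧ ∀ i, 1 ≤ f i := by
  simp [partTuples, Finset.Nat.mem_antidiagonalTuple]

lemma partCount_eq_card (k n : ℕ) : partCount k n = (partTuples k n).card := by
  unfold partCount
  refine Finset.card_bij (fun f _ i => (f i : ℕ)) ?_ ?_ ?_
  · intro f hf
    simp only [Finset.mem_filter, Finset.mem_univ, true_and] at hf
    exact mem_partTuples.2 ⟨hf.2.2, fun i j h => hf.1 i j h, hf.2.1⟩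
  · intro f _ g _ h
    funext i
    exact Fin.ext (congrFun h i)
  · intro f hf
    obtain ⟨h1, h2, h3⟩ := mem_partTuples.1 hf
    have hle : ∀ i, f i < n + 1 := fun i => by
      have := Finset.single_le_sum (f := f) (fun _ _ => Nat.zero_le _) (Finset.mem_univ i)
      omega
    refine ⟨fun i => ⟨f i, hle i⟩, ?_, rfl⟩
    simp only [Finset.mem_filter, Finset.mem_univ, true_and]
    exact ⟨fun i j h => h2 h, h3, h1⟩

lemma card_antidiagonalTuple_eq (k n : ℕ) :
    (Finset.Nat.antidiagonalTuple k n).card = Nat.multichoose k n := by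
  rw [← Fintype.card_fin k, ← Sym.card_sym_eq_multichoose, Fintype.card_fin,
    ← Nat.card_eq_fintype_card, Nat.card_congr (Sym.equivNatSumOfFintype (Fin k) n),
    ← Nat.card_eq_finsetCard]
  exact Nat.card_congr (Equiv.subtypeEquivRight fun f => Finset.Nat.mem_antidiagonalTuple)

/-- Every composition of `j + k` into `k` positive parts (that is, a tuple with sum `j` raised by
one in each entry) is a rearrangement of a partition, which has at most `k!` rearrangements. -/
lemma multichoose_le (k j : ℕ) :
    Nat.multichoose k j ≤ Nat.factorial k * partCount k (j + k) := by
  have hcard : Nat.factorial k * partCount k (j + k)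
      = ((Finset.univ : Finset (Equiv.Perm (Fin k))) ×ˢ partTuples k (j + k)).card := by
    rw [Finset.card_product, partCount_eq_card, Finset.card_univ, Fintype.card_perm,
      Fintype.card_fin]
  rw [hcard, ← card_antidiagonalTuple_eq]
  refine Finset.card_le_card_of_surjOn (fun p i => p.2 (p.1 i) - 1) ?_
  intro f hf
  have hf' : ∑ i, f i = j := Finset.Nat.mem_antidiagonalTuple.1 hf
  -- Sorting followed by `Fin.revPerm` puts `f` in decreasing order.
  set σ : Equiv.Perm (Fin k) := Fin.revPerm.trans (Tuple.sort f) with hσ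
  refine ⟨(σ.symm, fun i => f (σ i) + 1), ?_, ?_⟩
  · simp only [Finset.coe_product, Set.mem_prod, Finset.mem_coe, Finset.mem_univ, true_and,
      mem_partTuples]
    refine ⟨?_, ?_, fun i => by omega⟩
    · rw [Finset.sum_add_distrib, Equiv.sum_comp σ f, hf']
      simp
    · intro a b hab
      have := Tuple.monotone_sort f (Fin.rev_le_rev.2 hab)
      simpa [hσ] using this
  · funext i
    simp

/-- Adding the staircase `(k-1, …, 1, 0)` makes the parts of a partition distinct, so that its
`k!` rearrangements are distinct tuples. -/
lemma factorial_mul_partCount_le (k n : ℕ) :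
    Nat.factorial k * partCount k n
      ≤ Nat.multichoose k (n + ∑ i : Fin k, (i.rev : ℕ)) := by
  have hcard : Nat.factorial k * partCount k n
      = ((Finset.univ : Finset (Equiv.Perm (Fin k))) ×ˢ partTuples k n).card := by
    rw [Finset.card_product, partCount_eq_card, Finset.card_univ, Fintype.card_perm,
      Fintype.card_fin]
  have hanti : ∀ f ∈ partTuples k n, StrictAnti (fun i => f i + (i.rev : ℕ)) := by
    intro f hf a b hab
    have h1 := (mem_partTuples.1 hf).2.1 hab.le
    have h2 : (b.rev : ℕ) < a.rev := Fin.rev_lt_rev.2 hab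
    show f b + (b.rev : ℕ) < f a + (a.rev : ℕ)
    omega
  rw [hcard, ← card_antidiagonalTuple_eq]
  refine Finset.card_le_card_of_injOn
    (fun p => (fun i => p.2 i + (i.rev : ℕ)) ∘ p.1) ?_ ?_
  · rintro ⟨σ, f⟩ hp
    have hf : f ∈ partTuples k n := by simpa using hp
    simp only [Finset.mem_coe, Finset.Nat.mem_antidiagonalTuple, Function.comp_apply]
    rw [Equiv.sum_comp σ (fun i => f i + (i.rev : ℕ)), Finset.sum_add_distrib,
      (mem_partTuples.1 hf).1]
  · rintro ⟨σ, f⟩ hp ⟨τ, g⟩ hq h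
    have hf : f ∈ partTuples k n := by simpa using hp
    have hg : g ∈ partTuples k n := by simpa using hq
    dsimp only at h
    -- Strictly decreasing sequences with the same range coincide.
    have hr : (fun i => f i + (i.rev : ℕ)) = (fun i => g i + (i.rev : ℕ)) := by
      rw [← (hanti f hf).range_inj (hanti g hg), ← σ.surjective.range_comp, h,
        τ.surjective.range_comp]
    have hfg : f = g := by
      funext i
      exact Nat.add_right_cancel (congrFun hr i)
    subst hfg
    have hst : σ = τ := Equiv.ext fun i => (hanti f hf).injective (congrFun h i)
    rw [hst]

/-- The number of partitions into exactly `k` parts of the integers `1, …, N`. -/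
def partSum (k N : ℕ) : ℕ := ∑ n ∈ Finset.Icc 1 N, partCount k n

lemma choose_le_partSum {k N : ℕ} (hk : 1 ≤ k) :
    N.choose k ≤ Nat.factorial k * partSum k N := by
  rcases lt_or_ge N k with h | h
  · simp [Nat.choose_eq_zero_of_lt h]
  obtain ⟨m, rfl⟩ := Nat.exists_eq_add_of_le' h
  rw [← Nat.sum_range_multichoose, partSum, Finset.mul_sum]
  calc ∑ i ∈ Finset.range (m + 1), k.multichoose i
      ≤ ∑ i ∈ Finset.range (m + 1), Nat.factorial k * partCount k (i + k) :=
        Finset.sum_le_sum fun i _ => multichoose_le k i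
    _ = ∑ n ∈ (Finset.range (m + 1)).map (addRightEmbedding k),
          Nat.factorial k * partCount k n := by rw [Finset.sum_map]; rfl
    _ ≤ _ := by
        refine Finset.sum_le_sum_of_subset ?_
        intro n hn
        simp only [Finset.mem_map, Finset.mem_range, addRightEmbedding_apply] at hn
        obtain ⟨i, hi, rfl⟩ := hn
        rw [Finset.mem_Icc]
        omega

lemma partSum_le_choose (k N : ℕ) :
    Nat.factorial k * partSum k N
      ≤ (N + (∑ i : Fin k, (i.rev : ℕ) + k)).choose k := by
  set T := ∑ i : Fin k, (i.rev : ℕ) with hT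
  rw [← add_assoc, ← Nat.sum_range_multichoose, partSum, Finset.mul_sum]
  calc ∑ n ∈ Finset.Icc 1 N, Nat.factorial k * partCount k n
      ≤ ∑ n ∈ Finset.Icc 1 N, k.multichoose (n + T) :=
        Finset.sum_le_sum fun i _ => factorial_mul_partCount_le k i
    _ = ∑ n ∈ (Finset.Icc 1 N).map (addRightEmbedding T), k.multichoose n := by
        rw [Finset.sum_map]; rfl
    _ ≤ _ := by
        refine Finset.sum_le_sum_of_subset ?_
        intro n hn
        simp only [Finset.mem_map, Finset.mem_Icc, addRightEmbedding_apply] at hn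
        obtain ⟨i, hi, rfl⟩ := hn
        rw [Finset.mem_range]
        omega

open Filter Topology

lemma tendsto_shift_choose (k c : ℕ) :
    Tendsto (fun N : ℕ => ((N + c).choose k : ℝ) / (N : ℝ) ^ k) atTop
      (𝓝 (1 / (Nat.factorial k : ℝ))) := by
  have hfac : (Nat.factorial k : ℝ) ≠ 0 := by positivity
  have h1 : Tendsto (fun N : ℕ => (N.choose k : ℝ) / (N : ℝ) ^ k) atTop
      (𝓝 (1 / (Nat.factorial k : ℝ))) := by
    have h := (Asymptotics.isEquivalent_iff_tendsto_one (by
      filter_upwards [eventually_gt_atTop 0] with N hN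
      positivity)).1 (isEquivalent_choose k)
    refine (h.div_const (Nat.factorial k : ℝ)).congr' ?_
    filter_upwards [eventually_gt_atTop 0] with N hN
    have : (N : ℝ) ≠ 0 := by positivity
    simp only [Pi.div_apply]
    field_simp
  have h2 : Tendsto (fun N : ℕ => ((N : ℝ) + c) / N) atTop (𝓝 1) := by
    have h3 : Tendsto (fun N : ℕ => 1 + (c : ℝ) / N) atTop (𝓝 (1 + 0)) :=
      tendsto_const_nhds.add (tendsto_const_div_atTop_nhds_zero_nat (c : ℝ))
    rw [add_zero] at h3
    refine h3.congr' ?_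
    filter_upwards [eventually_gt_atTop 0] with N hN
    have : (N : ℝ) ≠ 0 := by positivity
    field_simp
  have h4 := (h1.comp (tendsto_add_atTop_nat c)).mul (h2.pow k)
  rw [one_pow, mul_one] at h4
  refine h4.congr' ?_
  filter_upwards [eventually_gt_atTop 0] with N hN
  have h5 : (N : ℝ) ≠ 0 := by positivity
  have h6 : (N : ℝ) + c ≠ 0 := by positivity
  simp only [Function.comp_apply, Nat.cast_add, div_pow]
  field_simp

lemma tendsto_partSum {k : ℕ} (hk : 1 ≤ k) :
    Tendsto (fun N : ℕ => (partSum k N : ℝ) / (N : ℝ) ^ k) atTop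
      (𝓝 (1 / (Nat.factorial k : ℝ) ^ 2)) := by
  have hfac : (0 : ℝ) < Nat.factorial k := by positivity
  have key : 1 / (Nat.factorial k : ℝ) ^ 2
      = 1 / (Nat.factorial k : ℝ) / (Nat.factorial k : ℝ) := by field_simp
  rw [key]
  refine tendsto_of_tendsto_of_tendsto_of_le_of_le
    ((tendsto_shift_choose k 0).div_const (Nat.factorial k : ℝ))
    ((tendsto_shift_choose k (∑ i : Fin k, (i.rev : ℕ) + k)).div_const
      (Nat.factorial k : ℝ)) ?_ ?_
  · intro N
    have h : (N.choose k : ℝ) ≤ Nat.factorial k * partSum k N := by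
      exact_mod_cast choose_le_partSum hk
    simp only [add_zero]
    rw [div_right_comm]
    gcongr
    rw [div_le_iff₀' hfac]
    exact h
  · intro N
    have h : (Nat.factorial k : ℝ) * partSum k N
        ≤ (N + (∑ i : Fin k, (i.rev : ℕ) + k)).choose k := by
      exact_mod_cast partSum_le_choose k N
    dsimp only
    rw [div_right_comm]
    gcongr
    rw [le_div_iff₀' hfac]
    exact h

lemma tendsto_half_div :
    Tendsto (fun D : ℕ => ((D / 2 : ℕ) : ℝ) / D) atTop (𝓝 (1 / 2)) := by
  have h := (tendsto_nat_floor_mul_div_atTop (R := ℝ) (a := 1 / 2) (by norm_num)).comp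
    tendsto_natCast_atTop_atTop
  refine h.congr fun D => ?_
  have : ⌊(1 / 2 : ℝ) * D⌋₊ = D / 2 := by
    rw [one_div_mul_eq_div]
    exact_mod_cast Nat.floor_div_eq_div (K := ℝ) D 2
  simp only [Function.comp_apply, this]

lemma tendsto_partSum_half {k : ℕ} (hk : 1 ≤ k) :
    Tendsto (fun D : ℕ => (partSum k (D / 2) : ℝ) / (D : ℝ) ^ k) atTop
      (𝓝 (1 / (Nat.factorial k : ℝ) ^ 2 * (1 / 2) ^ k)) := by
  have hhalf : Tendsto (fun D : ℕ => D / 2) atTop atTop :=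
    Nat.tendsto_div_const_atTop (by norm_num)
  refine (((tendsto_partSum hk).comp hhalf).mul (tendsto_half_div.pow k)).congr' ?_
  filter_upwards [eventually_ge_atTop 2] with D hD
  have h1 : 0 < D / 2 := by omega
  have h2 : ((D / 2 : ℕ) : ℝ) ≠ 0 := by positivity
  have h3 : (D : ℝ) ≠ 0 := by
    have : 0 < D := by omega
    positivity
  simp only [Function.comp_apply, div_pow]
  field_simp

lemma tendsto_partSum_half_div {k m : ℕ} (hk : 1 ≤ k) (hkm : k ≤ m) :
    Tendsto (fun D : ℕ => (partSum k (D / 2) : ℝ) / (D : ℝ) ^ m) atTop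
      (𝓝 (if k = m then 1 / (Nat.factorial m : ℝ) ^ 2 * (1 / 2) ^ m else 0)) := by
  split_ifs with h
  · subst h
    exact tendsto_partSum_half hk
  · obtain ⟨d, rfl⟩ := Nat.exists_eq_add_of_le hkm
    have hd : d ≠ 0 := by omega
    have h0 : Tendsto (fun D : ℕ => ((D : ℝ)⁻¹) ^ d) atTop (𝓝 0) := by
      simpa [hd] using (tendsto_inv_atTop_nhds_zero_nat (𝕜 := ℝ)).pow d
    have := (tendsto_partSum_half hk).mul h0
    rw [mul_zero] at this
    refine this.congr fun D => ?_
    rw [pow_add, inv_pow, ← div_eq_mul_inv, div_div]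

/-- For fixed `ν ≥ 3`, `A(ν, D) ~ D^(ν−1) / (2^(ν−2) ((ν−1)!)²)` as `D → ∞`. -/
theorem auxCount_asymptotics (ν : ℕ) (hν : 3 ≤ ν) :
    Filter.Tendsto
      (fun D : ℕ =>
        (auxCount ν D : ℝ) /
          ((D : ℝ) ^ (ν - 1) / (2 ^ (ν - 2) * (Nat.factorial (ν - 1)) ^ 2)))
      Filter.atTop (nhds 1) := by
  obtain ⟨m, rfl⟩ : ∃ m, ν = m + 2 := ⟨ν - 2, by omega⟩
  have e1 : m + 2 - 1 = m + 1 := by omega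
  have e2 : m + 2 - 2 = m := by omega
  rw [e1, e2]
  have hfac : (Nat.factorial (m + 1) : ℝ) ≠ 0 := by positivity
  have hsum := tendsto_finsetSum (Finset.Icc 2 (m + 1)) (fun k hk =>
    tendsto_partSum_half_div (k := k) (m := m + 1)
      (by have := (Finset.mem_Icc.1 hk).1; omega) (Finset.mem_Icc.1 hk).2)
  have hmem : m + 1 ∈ Finset.Icc 2 (m + 1) := Finset.mem_Icc.2 ⟨by omega, le_rfl⟩
  rw [Finset.sum_ite_eq' (Finset.Icc 2 (m + 1)) (m + 1), if_pos hmem] at hsum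
  have hmain := hsum.const_mul (2 * (2 ^ m * (Nat.factorial (m + 1) : ℝ) ^ 2))
  have hlim : 2 * (2 ^ m * (Nat.factorial (m + 1) : ℝ) ^ 2)
      * (1 / (Nat.factorial (m + 1) : ℝ) ^ 2 * (1 / 2) ^ (m + 1)) = 1 := by
    rw [one_div_pow, pow_succ (2 : ℝ) m]
    field_simp
  rw [hlim] at hmain
  refine hmain.congr fun D => ?_
  have haux : (auxCount (m + 2) D : ℝ)
      = 2 * ∑ k ∈ Finset.Icc 2 (m + 1), (partSum k (D / 2) : ℝ) := by
    simp only [auxCount, e1, partSum]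
    push_cast
    rfl
  rw [haux, ← Finset.sum_div, div_div_eq_mul_div]
  ring
end
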